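/- Let X, Y ∈ G_∞(H) be compatible subspaces such that X ∩ Y has codimension 2 in both X and Y, let Z ∈ G_∞(H) be ortho-adjacent to both X and Y, let P = Z ∩ X ∩ (X ∩ Y)^⊥ and Q = Z ∩ Y ∩ (X ∩ Y)^⊥, let P' be the orthogonal complement of P in X ∩ (X ∩ Y)^⊥ and Q' the orthogonal complement of Q in Y ∩ (X ∩ Y)^⊥. Then the subspaces Z₁ = P' ⊕ (X ∩ Y) ⊕ Q and Z₂ = P ⊕ (X ∩ Y) ⊕ Q' are elements of G_∞(H) ortho-adjacent to each of X, Y and Z. -/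

import Mathlib

open Module Submodule Classical

variable {H : Type*} [NormedAddCommGroup H] [InnerProductSpace ℂ H] [CompleteSpace H]

/-- The orthogonal projection of `H` onto a closed subspace `K`, as a map `H →L[ℂ] H`
(defined to be `0` if `K` is not closed). -/
noncomputable def projCLM (K : Submodule ℂ H) : H →L[ℂ] H :=
  if h : IsClosed (K : Set H) then
    haveI : CompleteSpace K := h.completeSpace_coe
    K.subtypeL.comp (orthogonalProjection K)
  else 0

/-- Two (closed) subspaces are compatible if their orthogonal projections commute. -/
def Compatible (K L : Submodule ℂ H) : Prop := Commute (projCLM K) (projCLM L)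

/-- `W` is a subspace of `X` of finite codimension `n` in `X`. -/
def CodimIn (W X : Submodule ℂ H) (n : ℕ) : Prop :=
  W ≤ X ∧ FiniteDimensional ℂ (↥X ⧸ W.comap X.subtype) ∧
    finrank ℂ (↥X ⧸ W.comap X.subtype) = n

/-- `X` and `Y` are adjacent: `X ∩ Y` is a hyperplane in both `X` and `Y`. -/
def Adjacent (X Y : Submodule ℂ H) : Prop :=
  CodimIn (X ⊓ Y) X 1 ∧ CodimIn (X ⊓ Y) Y 1

/-- `X` and `Y` are ortho-adjacent: adjacent and compatible. -/
def OrthoAdjacent (X Y : Submodule ℂ H) : Prop := Adjacent X Y ∧ Compatible X Y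

/-- The Grassmannian `G_∞(H)` of closed subspaces of `H` whose dimension and
codimension both are infinite. -/
def Ginf : Set (Submodule ℂ H) :=
  {X | IsClosed (X : Set H) ∧ ¬FiniteDimensional ℂ X ∧ ¬FiniteDimensional ℂ Xᗮ}

/-- `X ∩ Y` has the same finite codimension in both `X` and `Y`. -/
def SameFinCodim (X Y : Submodule ℂ H) : Prop :=
  ∃ n : ℕ, CodimIn (X ⊓ Y) X n ∧ CodimIn (X ⊓ Y) Y n

/-- An `A`-component of `G_∞(H)`: a set of elements pairwise at the same finite
codimension, maximal with respect to this property. -/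
def IsAComponent (C : Set (Submodule ℂ H)) : Prop :=
  C ⊆ Ginf ∧ (∀ X ∈ C, ∀ Y ∈ C, SameFinCodim X Y) ∧
    ∀ D : Set (Submodule ℂ H), D ⊆ Ginf → (∀ X ∈ D, ∀ Y ∈ D, SameFinCodim X Y) →
      C ⊆ D → D = C

/-- The star `S(X)`: all closed subspaces of `H` containing `X` as a hyperplane. -/
def starSet (X : Submodule ℂ H) : Set (Submodule ℂ H) :=
  {Y | IsClosed (Y : Set H) ∧ CodimIn X Y 1}

/-- The top `G¹(X)`: all closed hyperplanes of `X`. -/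
def topSet (X : Submodule ℂ H) : Set (Submodule ℂ H) :=
  {M | IsClosed (M : Set H) ∧ CodimIn M X 1}

/-- The image `U(M)` of a subspace `M ⊆ X` under a linear isometry `U : X ≃ X'`,
viewed as a subspace of `H`. -/
def imL (X X' : Submodule ℂ H) (U : ↥X ≃ₗᵢ[ℂ] ↥X') (M : Submodule ℂ H) : Submodule ℂ H :=
  Submodule.map X'.subtype (Submodule.map U.toLinearEquiv.toLinearMap (M.comap X.subtype))

/-- The image `U(M)` of a subspace `M ⊆ X` under a conjugate-linear isometry `U : X ≃ X'`,
viewed as a subspace of `H`. -/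
def imC (X X' : Submodule ℂ H) (U : ↥X ≃ₗᵢ⋆[ℂ] ↥X') (M : Submodule ℂ H) : Submodule ℂ H :=
  Submodule.map X'.subtype (Submodule.map U.toLinearEquiv.toLinearMap (M.comap X.subtype))

/-- The Grassmannian `G_k(H)` of `k`-dimensional subspaces of `H`. -/
def Gk (k : ℕ) : Set (Submodule ℂ H) :=
  {X | FiniteDimensional ℂ X ∧ finrank ℂ X = k}

/-- The Grassmannian `G^k(H)` of closed subspaces of `H` of codimension `k`. -/
def GCk (k : ℕ) : Set (Submodule ℂ H) :=
  {X | IsClosed (X : Set H) ∧ FiniteDimensional ℂ (H ⧸ X) ∧ finrank ℂ (H ⧸ X) = k}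


/-!
Write `W = X ⊓ Y`. Adjacency is a pair of covering relations in the modular lattice of subspaces,
where codimension 2 enters as `¬ W ⩿ X`; modularity then forces `W ⋖ Z ⊓ X`, `W ⋖ Z ⊓ Y` and
`Z = Z ⊓ X ⊔ Z ⊓ Y`. Taking orthogonal complements along `W ⋖ Z ⊓ X ⋖ X` and
`W ⋖ Z ⊓ Y ⋖ Y` splits off lines with `X = W ⊕ P ⊕ P'`, `Y = W ⊕ Q ⊕ Q'` and
`Z = W ⊕ P ⊕ Q`, and compatibility of `X` and `Y` makes all four lines pairwise orthogonal.
Two subspaces obtained from a common closed subspace by adding lines orthogonal to it and to each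
other are ortho-adjacent, and each of `Z₁`, `Z₂` shares two of the three summands with each of
`X`, `Y`, `Z`.
-/

section ModularLattice

variable {α : Type*} [Lattice α] {x y z : α}

theorem inf_ne_inf_of_not_inf_wcovBy (hxy : ¬x ⊓ y ⩿ x) (hzx : z ⊓ x ⋖ x) :
    z ⊓ x ≠ z ⊓ y := by
  intro heq
  have hle : z ⊓ x ≤ x ⊓ y := le_inf inf_le_right (heq.trans_le inf_le_right)
  rcases hzx.eq_or_eq hle inf_le_left with h | h
  · exact hxy (h ▸ hzx.wcovBy)
  · exact hxy h.wcovBy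

variable [IsModularLattice α]

theorem inf_le_of_not_inf_wcovBy (hxy : ¬x ⊓ y ⩿ x) (hzx : z ⊓ x ⋖ x)
    (hinf : z ⊓ x ⊓ (z ⊓ y) ⋖ z ⊓ x) : x ⊓ y ≤ z := by
  by_contra hz
  have hsup : x ⊓ y ⊔ z ⊓ x = x :=
    (hzx.eq_or_eq le_sup_right (sup_le inf_le_left inf_le_right)).resolve_left
      fun h => hz ((le_sup_left.trans_eq h).trans inf_le_left)
  have hinf' : x ⊓ y ⊓ (z ⊓ x) ⋖ z ⊓ x := by
    convert hinf using 1
    ac_rfl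
  exact hxy (hsup ▸ covBy_sup_of_inf_covBy_right hinf').wcovBy

theorem inf_sup_inf_eq_and_inf_covBy_of_not_inf_wcovBy (hxy : ¬x ⊓ y ⩿ x) (hx : z ⊓ x ⋖ x)
    (hzx : z ⊓ x ⋖ z) (hzy : z ⊓ y ⋖ z) :
    z ⊓ x ⊔ z ⊓ y = z ∧ x ⊓ y ⋖ z ⊓ x ∧ x ⊓ y ⋖ z ⊓ y := by
  have hsup : z ⊓ x ⊔ z ⊓ y = z :=
    hzx.wcovBy.sup_eq hzy.wcovBy (inf_ne_inf_of_not_inf_wcovBy hxy hx)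
  have hcov_x : z ⊓ x ⊓ (z ⊓ y) ⋖ z ⊓ x := inf_covBy_of_covBy_sup_right (hsup.symm ▸ hzy)
  have hcov_y : z ⊓ x ⊓ (z ⊓ y) ⋖ z ⊓ y := inf_covBy_of_covBy_sup_left (hsup.symm ▸ hzx)
  have hinf : z ⊓ x ⊓ (z ⊓ y) = x ⊓ y := by
    rw [← inf_inf_distrib_left, inf_eq_right]
    exact inf_le_of_not_inf_wcovBy hxy hx hcov_x
  exact ⟨hsup, hinf ▸ hcov_x, hinf ▸ hcov_y⟩

end ModularLattice

theorem finiteDimensional_of_isAtom {K V : Type*} [DivisionRing K] [AddCommGroup V] [Module K V]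
    {U : Submodule K V} (hU : IsAtom U) : FiniteDimensional K U := by
  obtain ⟨u, -, rfl⟩ := (atom_iff_nonzero_span U).1 hU
  infer_instance

section InnerProductSpace

variable {𝕜 E : Type*} [RCLike 𝕜] [NormedAddCommGroup E] [InnerProductSpace 𝕜 E]
  {U V W X Y : Submodule 𝕜 E}

theorem sup_inf_orthogonal_eq_of_le [W.HasOrthogonalProjection] (h : W ≤ X) :
    W ⊔ X ⊓ Wᗮ = X := by
  rw [inf_comm]
  exact sup_orthogonal_inf_of_hasOrthogonalProjection h

theorem isAtom_inf_orthogonal_of_covBy [W.HasOrthogonalProjection] (h : W ⋖ X) :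
    IsAtom (X ⊓ Wᗮ) := by
  have hinf : W ⊓ (X ⊓ Wᗮ) = ⊥ := by
    rw [inf_left_comm, inf_orthogonal_eq_bot, inf_bot_eq]
  rw [← bot_covBy_iff, ← hinf]
  exact inf_covBy_of_covBy_sup_left ((sup_inf_orthogonal_eq_of_le h.le).symm ▸ h)

theorem isClosed_of_isAtom (hU : IsAtom U) : IsClosed (U : Set E) :=
  have := finiteDimensional_of_isAtom hU
  closed_of_finiteDimensional U

theorem sup_inf_sup_eq_of_isOrtho (hVW : V ⟂ W) (hUW : U ⟂ W) : (U ⊔ V) ⊓ (U ⊔ W) = U := by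
  have hinf : W ⊓ (U ⊔ V) = ⊥ := (isOrtho_sup_left.2 ⟨hUW, hVW⟩).symm.disjoint.eq_bot
  rw [inf_comm, sup_inf_assoc_of_le W le_sup_left, hinf, sup_bot_eq]

theorem sub_starProjection_add_starProjection_mem_orthogonal_sup [U.HasOrthogonalProjection]
    [V.HasOrthogonalProjection] (h : U ⟂ V) (x : E) :
    x - (U.starProjection x + V.starProjection x) ∈ (U ⊔ V)ᗮ := by
  rw [← inf_orthogonal]
  constructor
  · rw [← sub_sub]
    exact sub_mem (sub_starProjection_mem_orthogonal x) (h.symm (V.starProjection_apply_mem x))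
  · rw [add_comm, ← sub_sub]
    exact sub_mem (sub_starProjection_mem_orthogonal x) (h (U.starProjection_apply_mem x))

theorem hasOrthogonalProjection_sup_of_isOrtho [U.HasOrthogonalProjection]
    [V.HasOrthogonalProjection] (h : U ⟂ V) : (U ⊔ V).HasOrthogonalProjection :=
  ⟨fun x => ⟨U.starProjection x + V.starProjection x,
    add_mem_sup (U.starProjection_apply_mem x) (V.starProjection_apply_mem x),
    sub_starProjection_add_starProjection_mem_orthogonal_sup h x⟩⟩

theorem starProjection_sup_of_isOrtho [U.HasOrthogonalProjection] [V.HasOrthogonalProjection]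
    [(U ⊔ V).HasOrthogonalProjection] (h : U ⟂ V) :
    (U ⊔ V).starProjection = U.starProjection + V.starProjection :=
  ContinuousLinearMap.ext fun x => eq_starProjection_of_mem_orthogonal
    (add_mem_sup (U.starProjection_apply_mem x) (V.starProjection_apply_mem x))
    (sub_starProjection_add_starProjection_mem_orthogonal_sup h x)

theorem isClosed_iff_hasOrthogonalProjection [CompleteSpace E] :
    IsClosed (U : Set E) ↔ U.HasOrthogonalProjection := by
  refine ⟨fun h => ?_, fun _ => ?_⟩
  · have := h.completeSpace_coe
    infer_instance
  · rw [← U.orthogonal_orthogonal]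
    exact Uᗮ.isClosed_orthogonal

theorem isClosed_sup_of_isOrtho [CompleteSpace E] (hU : IsClosed (U : Set E))
    (hV : IsClosed (V : Set E)) (h : U ⟂ V) : IsClosed ((U ⊔ V : Submodule 𝕜 E) : Set E) := by
  rw [isClosed_iff_hasOrthogonalProjection] at hU hV ⊢
  exact hasOrthogonalProjection_sup_of_isOrtho h

theorem commute_starProjection_of_isOrtho [U.HasOrthogonalProjection]
    [V.HasOrthogonalProjection] (h : U ⟂ V) : Commute U.starProjection V.starProjection :=
  h.starProjection_comp_starProjection.trans h.symm.starProjection_comp_starProjection.symm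

theorem commute_starProjection_sup_sup [U.HasOrthogonalProjection] [V.HasOrthogonalProjection]
    [W.HasOrthogonalProjection] [(U ⊔ V).HasOrthogonalProjection]
    [(U ⊔ W).HasOrthogonalProjection] (hUV : U ⟂ V) (hUW : U ⟂ W) (hVW : V ⟂ W) :
    Commute (U ⊔ V).starProjection (U ⊔ W).starProjection := by
  rw [starProjection_sup_of_isOrtho hUV, starProjection_sup_of_isOrtho hUW]
  exact ((Commute.refl _).add_right (commute_starProjection_of_isOrtho hUW)).add_left
    ((commute_starProjection_of_isOrtho hUV.symm).add_right
      (commute_starProjection_of_isOrtho hVW))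

theorem isOrtho_inf_orthogonal_of_commute_starProjection [X.HasOrthogonalProjection]
    [Y.HasOrthogonalProjection] (h : Commute X.starProjection Y.starProjection) :
    X ⟂ Y ⊓ (X ⊓ Y)ᗮ := by
  rw [isOrtho_iff_inner_eq]
  rintro x hx y ⟨hy, hy_orth⟩
  have hmem : Y.starProjection x ∈ X ⊓ Y := by
    refine ⟨?_, Y.starProjection_apply_mem x⟩
    have hcomm : X.starProjection (Y.starProjection x) = Y.starProjection (X.starProjection x) :=
      DFunLike.congr_fun h.eq x
    rw [starProjection_eq_self_iff.2 hx] at hcomm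
    exact starProjection_eq_self_iff.1 hcomm
  calc inner 𝕜 x y = inner 𝕜 x (Y.starProjection y) := by rw [starProjection_eq_self_iff.2 hy]
    _ = inner 𝕜 (Y.starProjection x) y := (inner_starProjection_left_eq_right Y x y).symm
    _ = 0 := inner_right_of_mem_orthogonal hmem hy_orth

/-- `X` is the orthogonal sum of `W` and two orthogonal lines `P` and `P'`, a line being an atom
of the lattice of subspaces. -/
structure IsOrthoSumOfLines (W P P' X : Submodule 𝕜 E) : Prop where
  isAtom_left : IsAtom P
  isAtom_right : IsAtom P'
  isOrtho : P ⟂ P'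
  isOrtho_sup : W ⟂ P ⊔ P'
  sup_eq : W ⊔ P ⊔ P' = X

theorem IsOrthoSumOfLines.sup_le_inf_orthogonal {P P' : Submodule 𝕜 E}
    (h : IsOrthoSumOfLines W P P' X) : P ⊔ P' ≤ X ⊓ Wᗮ :=
  le_inf (h.sup_eq ▸ sup_le_sup_right le_sup_right P') h.isOrtho_sup.symm

theorem isOrthoSumOfLines_of_covBy_of_covBy [W.HasOrthogonalProjection] (hWU : W ⋖ U)
    (hUX : U ⋖ X) : IsOrthoSumOfLines W (U ⊓ Wᗮ) ((U ⊓ Wᗮ)ᗮ ⊓ (X ⊓ Wᗮ)) X := by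
  have hWP : W ⟂ U ⊓ Wᗮ := W.isOrtho_orthogonal_right.mono_right inf_le_right
  have hU : W ⊔ U ⊓ Wᗮ = U := sup_inf_orthogonal_eq_of_le hWU.le
  have hP' : (U ⊓ Wᗮ)ᗮ ⊓ (X ⊓ Wᗮ) = X ⊓ Uᗮ := by
    rw [inf_left_comm, inf_comm _ Wᗮ, inf_orthogonal, hU]
  have := finiteDimensional_of_isAtom (isAtom_inf_orthogonal_of_covBy hWU)
  have : U.HasOrthogonalProjection := hU ▸ hasOrthogonalProjection_sup_of_isOrtho hWP
  exact
    { isAtom_left := isAtom_inf_orthogonal_of_covBy hWU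
      isAtom_right := hP' ▸ isAtom_inf_orthogonal_of_covBy hUX
      isOrtho := (U ⊓ Wᗮ).isOrtho_orthogonal_right.mono_right inf_le_left
      isOrtho_sup := W.isOrtho_orthogonal_right.mono_right
        (sup_le inf_le_right (inf_le_right.trans inf_le_right))
      sup_eq := by rw [hU, hP', sup_inf_orthogonal_eq_of_le hUX.le] }

end InnerProductSpace

section Codimension

variable {E : Type*} [NormedAddCommGroup E] [InnerProductSpace ℂ E] {W X Y : Submodule ℂ E}

theorem codimIn_one_iff_covBy : CodimIn W X 1 ↔ W ⋖ X := by
  constructor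
  · rintro ⟨hle, -, hrank⟩
    rw [covBy_iff_quot_is_simple hle]
    exact isSimpleModule_iff_finrank_eq_one.2 hrank
  · intro h
    have hrank := isSimpleModule_iff_finrank_eq_one.1 ((covBy_iff_quot_is_simple h.le).1 h)
    exact ⟨h.le, FiniteDimensional.of_finrank_pos (hrank ▸ one_pos), hrank⟩

theorem CodimIn.le_one_of_wcovBy {n : ℕ} (h : CodimIn W X n) (hWX : W ⩿ X) : n ≤ 1 := by
  obtain ⟨-, -, rfl⟩ := h
  rcases wcovBy_iff_covBy_or_eq.1 hWX with hcov | rfl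
  · exact (codimIn_one_iff_covBy.2 hcov).2.2.le
  · rw [comap_subtype_self, finrank_zero_of_subsingleton]
    exact zero_le_one

theorem adjacent_iff_covBy : Adjacent X Y ↔ X ⊓ Y ⋖ X ∧ X ⊓ Y ⋖ Y :=
  and_congr codimIn_one_iff_covBy codimIn_one_iff_covBy

end Codimension

variable {A A' B B' K L U V W X Y : Submodule ℂ H}

theorem projCLM_eq_starProjection [K.HasOrthogonalProjection] :
    projCLM K = K.starProjection :=
  dif_pos (isClosed_iff_hasOrthogonalProjection.2 inferInstance)

theorem compatible_sup_sup (hU : IsClosed (U : Set H)) (hV : IsClosed (V : Set H))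
    (hW : IsClosed (W : Set H)) (hUV : U ⟂ V) (hUW : U ⟂ W) (hVW : V ⟂ W) :
    Compatible (U ⊔ V) (U ⊔ W) := by
  rw [isClosed_iff_hasOrthogonalProjection] at hU hV hW
  have := hasOrthogonalProjection_sup_of_isOrtho hUV
  have := hasOrthogonalProjection_sup_of_isOrtho hUW
  rw [Compatible, projCLM_eq_starProjection, projCLM_eq_starProjection]
  exact commute_starProjection_sup_sup hUV hUW hVW

theorem Compatible.isOrtho_inf_orthogonal (h : Compatible X Y) (hX : IsClosed (X : Set H))
    (hY : IsClosed (Y : Set H)) : X ⟂ Y ⊓ (X ⊓ Y)ᗮ := by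
  rw [isClosed_iff_hasOrthogonalProjection] at hX hY
  rw [Compatible, projCLM_eq_starProjection, projCLM_eq_starProjection] at h
  exact isOrtho_inf_orthogonal_of_commute_starProjection h

theorem orthoAdjacent_sup_sup (hU : IsClosed (U : Set H)) (hA : IsAtom A) (hB : IsAtom B)
    (hUA : U ⟂ A) (hUB : U ⟂ B) (hAB : A ⟂ B) : OrthoAdjacent (U ⊔ A) (U ⊔ B) := by
  refine ⟨adjacent_iff_covBy.2 ?_,
    compatible_sup_sup hU (isClosed_of_isAtom hA) (isClosed_of_isAtom hB) hUA hUB hAB⟩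
  rw [sup_inf_sup_eq_of_isOrtho hAB hUB]
  exact ⟨covBy_sup_of_inf_covBy_right (hUA.disjoint.eq_bot ▸ hA.bot_covBy),
    covBy_sup_of_inf_covBy_right (hUB.disjoint.eq_bot ▸ hB.bot_covBy)⟩

theorem sup_mem_Ginf_iff (hV : IsClosed (V : Set H)) [FiniteDimensional ℂ U] (hVU : V ⟂ U) :
    V ⊔ U ∈ Ginf ↔ V ∈ Ginf := by
  have hclosed := isClosed_sup_of_isOrtho hV (closed_of_finiteDimensional U) hVU
  have hdim : FiniteDimensional ℂ ↥(V ⊔ U) ↔ FiniteDimensional ℂ V :=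
    ⟨fun _ => finiteDimensional_of_le (le_sup_left : V ≤ V ⊔ U), fun _ => inferInstance⟩
  have horth : U ⊔ (V ⊔ U)ᗮ = Vᗮ := by
    rw [← inf_orthogonal, inf_comm]
    exact sup_orthogonal_inf_of_hasOrthogonalProjection hVU.symm
  have hcodim : FiniteDimensional ℂ ↥(V ⊔ U)ᗮ ↔ FiniteDimensional ℂ Vᗮ :=
    ⟨fun _ => horth ▸ inferInstance,
      fun _ => finiteDimensional_of_le (orthogonal_le (le_sup_left : V ≤ V ⊔ U))⟩
  simp only [Ginf, Set.mem_ofPred_eq, hclosed, hV, hdim, hcodim]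

theorem mem_Ginf_iff_of_covBy (hV : IsClosed (V : Set H)) (h : V ⋖ K) :
    K ∈ Ginf ↔ V ∈ Ginf := by
  have := isClosed_iff_hasOrthogonalProjection.1 hV
  have := finiteDimensional_of_isAtom (isAtom_inf_orthogonal_of_covBy h)
  have hortho : V ⟂ K ⊓ Vᗮ := V.isOrtho_orthogonal_right.mono_right inf_le_right
  rw [← sup_mem_Ginf_iff hV hortho, sup_inf_orthogonal_eq_of_le h.le]

theorem Adjacent.mem_Ginf (h : Adjacent K L) (hK : IsClosed (K : Set H)) (hL : L ∈ Ginf) :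
    K ∈ Ginf := by
  obtain ⟨hcovK, hcovL⟩ := adjacent_iff_covBy.1 h
  have hclosed : IsClosed ((K ⊓ L : Submodule ℂ H) : Set H) := hK.inter hL.1
  rwa [mem_Ginf_iff_of_covBy hclosed hcovK, ← mem_Ginf_iff_of_covBy hclosed hcovL]

theorem isClosed_and_orthoAdjacent_of_isOrthoSumOfLines (hW : IsClosed (W : Set H))
    (hX : IsOrthoSumOfLines W A A' X) (hY : IsOrthoSumOfLines W B B' Y)
    (hortho : A ⊔ A' ⟂ B ⊔ B') :
    IsClosed ((W ⊔ A' ⊔ B : Submodule ℂ H) : Set H) ∧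
      OrthoAdjacent (W ⊔ A' ⊔ B) X ∧ OrthoAdjacent (W ⊔ A' ⊔ B) Y ∧
      OrthoAdjacent (W ⊔ A' ⊔ B) (W ⊔ A ⊔ B) := by
  obtain ⟨hA, hA', hAA', hWAA', rfl⟩ := hX
  obtain ⟨hB, hB', hBB', hWBB', rfl⟩ := hY
  simp only [isOrtho_sup_left, isOrtho_sup_right] at hortho hWAA' hWBB'
  obtain ⟨⟨hAB, hA'B⟩, -, hA'B'⟩ := hortho
  obtain ⟨hWA, hWA'⟩ := hWAA'
  obtain ⟨hWB, hWB'⟩ := hWBB'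
  have hclosed_A' := isClosed_sup_of_isOrtho hW (isClosed_of_isAtom hA') hWA'
  have hclosed_B := isClosed_sup_of_isOrtho hW (isClosed_of_isAtom hB) hWB
  have hWA'_B : W ⊔ A' ⟂ B := isOrtho_sup_left.2 ⟨hWB, hA'B⟩
  have hWA'_A : W ⊔ A' ⟂ A := isOrtho_sup_left.2 ⟨hWA, hAA'.symm⟩
  have hWB_A' : W ⊔ B ⟂ A' := isOrtho_sup_left.2 ⟨hWA', hA'B.symm⟩
  have hWB_A : W ⊔ B ⟂ A := isOrtho_sup_left.2 ⟨hWA, hAB.symm⟩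
  have hWB_B' : W ⊔ B ⟂ B' := isOrtho_sup_left.2 ⟨hWB', hBB'⟩
  refine ⟨isClosed_sup_of_isOrtho hclosed_A' (isClosed_of_isAtom hB) hWA'_B, ?_, ?_, ?_⟩
  · rw [sup_right_comm W A A']
    exact orthoAdjacent_sup_sup hclosed_A' hB hA hWA'_B hWA'_A hAB.symm
  · rw [sup_right_comm W A' B]
    exact orthoAdjacent_sup_sup hclosed_B hA' hB' hWB_A' hWB_B' hA'B'
  · rw [sup_right_comm W A' B, sup_right_comm W A B]
    exact orthoAdjacent_sup_sup hclosed_B hA' hA hWB_A' hWB_A hAA'.symm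

theorem stmt17_general (X Y Z : Submodule ℂ H)
    (hX : IsClosed (X : Set H)) (hY : IsClosed (Y : Set H)) (hcomp : Compatible X Y)
    (h2X : CodimIn (X ⊓ Y) X 2) (hZX : Adjacent Z X) (hZY : Adjacent Z Y)
    (P Q P' Q' Z₁ Z₂ : Submodule ℂ H)
    (hP : P = Z ⊓ X ⊓ (X ⊓ Y)ᗮ) (hQ : Q = Z ⊓ Y ⊓ (X ⊓ Y)ᗮ)
    (hP' : P' = Pᗮ ⊓ (X ⊓ (X ⊓ Y)ᗮ)) (hQ' : Q' = Qᗮ ⊓ (Y ⊓ (X ⊓ Y)ᗮ))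
    (hZ₁ : Z₁ = P' ⊔ (X ⊓ Y) ⊔ Q) (hZ₂ : Z₂ = P ⊔ (X ⊓ Y) ⊔ Q') :
    IsClosed (Z₁ : Set H) ∧ IsClosed (Z₂ : Set H) ∧
    OrthoAdjacent Z₁ X ∧ OrthoAdjacent Z₁ Y ∧ OrthoAdjacent Z₁ Z ∧
    OrthoAdjacent Z₂ X ∧ OrthoAdjacent Z₂ Y ∧ OrthoAdjacent Z₂ Z := by
  have hW : IsClosed ((X ⊓ Y : Submodule ℂ H) : Set H) := hX.inter hY
  have := isClosed_iff_hasOrthogonalProjection.1 hW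
  obtain ⟨hcov_Z_X, hcov_X⟩ := adjacent_iff_covBy.1 hZX
  obtain ⟨hcov_Z_Y, hcov_Y⟩ := adjacent_iff_covBy.1 hZY
  have hXY : ¬X ⊓ Y ⩿ X := fun h => absurd (h2X.le_one_of_wcovBy h) (by decide)
  obtain ⟨hsup, hcov_W_X, hcov_W_Y⟩ :=
    inf_sup_inf_eq_and_inf_covBy_of_not_inf_wcovBy hXY hcov_X hcov_Z_X hcov_Z_Y
  have hsum_X : IsOrthoSumOfLines (X ⊓ Y) P P' X := by
    rw [hP', hP]
    exact isOrthoSumOfLines_of_covBy_of_covBy hcov_W_X hcov_X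
  have hsum_Y : IsOrthoSumOfLines (X ⊓ Y) Q Q' Y := by
    rw [hQ', hQ]
    exact isOrthoSumOfLines_of_covBy_of_covBy hcov_W_Y hcov_Y
  have hsum_Z : X ⊓ Y ⊔ P ⊔ Q = Z := by
    rw [sup_assoc, sup_sup_distrib_left, hP, hQ, sup_inf_orthogonal_eq_of_le hcov_W_X.le,
      sup_inf_orthogonal_eq_of_le hcov_W_Y.le, hsup]
  have hortho : P ⊔ P' ⟂ Q ⊔ Q' :=
    (hcomp.isOrtho_inf_orthogonal hX hY).mono
      (hsum_X.sup_le_inf_orthogonal.trans inf_le_left) hsum_Y.sup_le_inf_orthogonal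
  obtain ⟨hclosed₁, hadj_X₁, hadj_Y₁, hadj_Z₁⟩ :=
    isClosed_and_orthoAdjacent_of_isOrthoSumOfLines hW hsum_X hsum_Y hortho
  obtain ⟨hclosed₂, hadj_Y₂, hadj_X₂, hadj_Z₂⟩ :=
    isClosed_and_orthoAdjacent_of_isOrthoSumOfLines hW hsum_Y hsum_X hortho.symm
  rw [sup_comm (X ⊓ Y) P', ← hZ₁] at hclosed₁ hadj_X₁ hadj_Y₁ hadj_Z₁
  rw [sup_right_comm, sup_comm (X ⊓ Y) P, ← hZ₂] at hclosed₂ hadj_X₂ hadj_Y₂ hadj_Z₂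
  rw [hsum_Z] at hadj_Z₁
  rw [sup_right_comm, hsum_Z] at hadj_Z₂
  exact ⟨hclosed₁, hclosed₂, hadj_X₁, hadj_Y₁, hadj_Z₁, hadj_X₂, hadj_Y₂, hadj_Z₂⟩

/-- with `X, Y ∈ G_∞(H)` compatible, `X ∩ Y` of codimension 2 in both, `Z`
ortho-adjacent to both, and `P, Q, P', Q'` as in Lemma 3.1, the subspaces
`Z₁ = P' ⊕ (X ∩ Y) ⊕ Q` and `Z₂ = P ⊕ (X ∩ Y) ⊕ Q'` belong to `G_∞(H)` and are
ortho-adjacent to each of `X, Y, Z`. -/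
theorem stmt17 (hH : ¬FiniteDimensional ℂ H) (X Y Z : Submodule ℂ H)
    (hX : X ∈ Ginf (H := H)) (hY : Y ∈ Ginf (H := H)) (hZ : Z ∈ Ginf (H := H))
    (hcomp : Compatible X Y)
    (h2X : CodimIn (X ⊓ Y) X 2) (h2Y : CodimIn (X ⊓ Y) Y 2)
    (hZX : OrthoAdjacent Z X) (hZY : OrthoAdjacent Z Y)
    (P Q P' Q' Z₁ Z₂ : Submodule ℂ H)
    (hP : P = Z ⊓ X ⊓ (X ⊓ Y)ᗮ) (hQ : Q = Z ⊓ Y ⊓ (X ⊓ Y)ᗮ)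
    (hP' : P' = Pᗮ ⊓ (X ⊓ (X ⊓ Y)ᗮ)) (hQ' : Q' = Qᗮ ⊓ (Y ⊓ (X ⊓ Y)ᗮ))
    (hZ₁ : Z₁ = P' ⊔ (X ⊓ Y) ⊔ Q) (hZ₂ : Z₂ = P ⊔ (X ⊓ Y) ⊔ Q') :
    Z₁ ∈ Ginf (H := H) ∧ Z₂ ∈ Ginf (H := H) ∧
    OrthoAdjacent Z₁ X ∧ OrthoAdjacent Z₁ Y ∧ OrthoAdjacent Z₁ Z ∧
    OrthoAdjacent Z₂ X ∧ OrthoAdjacent Z₂ Y ∧ OrthoAdjacent Z₂ Z := by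
  obtain ⟨hclosed₁, hclosed₂, hadj_X₁, hadj_Y₁, hadj_Z₁, hadj_X₂, hadj_YZ₂⟩ :=
    stmt17_general X Y Z hX.1 hY.1 hcomp h2X hZX.1 hZY.1 P Q P' Q' Z₁ Z₂ hP hQ hP' hQ' hZ₁ hZ₂
  exact ⟨hadj_X₁.1.mem_Ginf hclosed₁ hX, hadj_X₂.1.mem_Ginf hclosed₂ hX,
    hadj_X₁, hadj_Y₁, hadj_Z₁, hadj_X₂, hadj_YZ₂⟩
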